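/- Under the potential-outcomes IV setup, suppose b > 0, c > 0 and b ≠ c (so k1 ≠ k2). Then β = (μ1·b − μ2·c) / (b − c). -/

import Mathlib

/-!
Conditionally on `Z = z` the realized variables `D` and `Y` coincide with `D(z)` and
`Y(1) D(z) + Y(0) (1 - D(z))`, which are functions of the potential outcomes and hence independent
of `Z`; so their conditional means are unconditional ones (`integral_cond_fiber_eq`). Subtracting,
the numerator of `β` is `E[(Y(1) - Y(0)) (D(1) - D(0))]` and its denominator is `E[D(1) - D(0)]`.
Since `D(1) - D(0)` is `1` on compliers, `-1` on defiers and `0` elsewhere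
(`integral_mul_sub_eq`), these equal `μ1 b - μ2 c` and `b - c`.
-/

open MeasureTheory ProbabilityTheory

set_option linter.unusedVariables false

theorem measureReal_mul_integral_cond {Ω : Type*} [MeasurableSpace Ω] (μ : Measure Ω)
    [IsProbabilityMeasure μ] {s : Set Ω} (hs0 : μ s ≠ 0) (f : Ω → ℝ) :
    μ.real s * ∫ ω, f ω ∂(μ[|s]) = ∫ ω in s, f ω ∂μ := by
  have h : μ.real s ≠ 0 := (measureReal_ne_zero_iff).2 hs0
  rw [ProbabilityTheory.cond, integral_smul_measure, ENNReal.toReal_inv, smul_eq_mul]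
  exact mul_inv_cancel_left₀ h _

/-- If `X` agrees on the event `Z = z` with a function `g W` of a variable `W` independent of `Z`,
then `E[X | Z = z] = E[g W]`. No integrability is needed. -/
theorem integral_cond_fiber_eq {Ω E : Type*} [MeasurableSpace Ω] [MeasurableSpace E]
    (μ : Measure Ω) [IsProbabilityMeasure μ] {Z : Ω → ℝ} {W : Ω → E} (hZ : Measurable Z)
    (hW : Measurable W) (hind : IndepFun Z W μ) {z : ℝ} (hz : μ {ω | Z ω = z} ≠ 0)
    {g : E → ℝ} (hg : Measurable g) {X : Ω → ℝ} (hX : ∀ ω, Z ω = z → X ω = g (W ω)) :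
    ∫ ω, X ω ∂(μ[|{ω | Z ω = z}]) = ∫ ω, g (W ω) ∂μ := by
  have hs : MeasurableSet {ω | Z ω = z} := hZ (measurableSet_singleton z)
  have hr : μ.real {ω | Z ω = z} ≠ 0 := (measureReal_ne_zero_iff).2 hz
  apply mul_left_cancel₀ hr
  rw [measureReal_mul_integral_cond μ hz, setIntegral_congr_fun hs (g := fun ω => g (W ω)) hX]
  have hi : Measurable (({z} : Set ℝ).indicator (fun _ => (1 : ℝ))) :=
    measurable_const.indicator (measurableSet_singleton z)
  have hmul := (hind.comp hi hg).integral_fun_mul_eq_mul_integral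
    (hi.comp hZ).aestronglyMeasurable (hg.comp hW).aestronglyMeasurable
  have h1 : ({z} : Set ℝ).indicator (fun _ => (1 : ℝ)) ∘ Z
      = {ω | Z ω = z}.indicator (fun _ => (1 : ℝ)) := rfl
  rw [h1, integral_indicator_const _ hs] at hmul
  rw [← integral_indicator hs]
  simpa [Set.indicator] using hmul

/-- For `0`-`1`-valued `D1`, `D0`, weighting by `D1 - D0` integrates positively over compliers and
negatively over defiers. -/
theorem integral_mul_sub_eq {Ω : Type*} [MeasurableSpace Ω] (μ : Measure Ω)
    {D1 D0 : Ω → ℝ} (hD1m : Measurable D1) (hD0m : Measurable D0)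
    (hD1 : ∀ ω, D1 ω = 0 ∨ D1 ω = 1) (hD0 : ∀ ω, D0 ω = 0 ∨ D0 ω = 1)
    {g : Ω → ℝ} (hg : Integrable g μ) :
    ∫ ω, g ω * (D1 ω - D0 ω) ∂μ
      = (∫ ω in {ω | D1 ω = 1 ∧ D0 ω = 0}, g ω ∂μ)
        - ∫ ω in {ω | D1 ω = 0 ∧ D0 ω = 1}, g ω ∂μ := by
  have hs (x y : ℝ) : MeasurableSet {ω | D1 ω = x ∧ D0 ω = y} :=
    (hD1m (measurableSet_singleton x)).inter (hD0m (measurableSet_singleton y))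
  rw [← integral_indicator (hs 1 0), ← integral_indicator (hs 0 1),
    ← integral_sub (hg.indicator (hs 1 0)) (hg.indicator (hs 0 1))]
  congr 1
  ext ω
  rcases hD1 ω with h1 | h1 <;> rcases hD0 ω with h0 | h0 <;> simp [Set.indicator, h1, h0]

theorem integrable_mul_of_zero_or_one {Ω : Type*} [MeasurableSpace Ω] {μ : Measure Ω}
    {T g : Ω → ℝ} (hTm : Measurable T) (hT : ∀ ω, T ω = 0 ∨ T ω = 1) (hg : Integrable g μ) :
    Integrable (fun ω => g ω * T ω) μ := by
  refine hg.mul_bdd (c := 1) hTm.aestronglyMeasurable (.of_forall fun ω => ?_)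
  rcases hT ω with h | h <;> simp [h]

theorem stmt3 {Ω : Type*} [MeasurableSpace Ω] (μ : Measure Ω) [IsProbabilityMeasure μ]
    (Y1 Y0 Z D1 D0 : Ω → ℝ)
    (hY1m : Measurable Y1) (hY0m : Measurable Y0) (hZm : Measurable Z)
    (hD1m : Measurable D1) (hD0m : Measurable D0)
    (hZ01 : ∀ ω, Z ω = 0 ∨ Z ω = 1)
    (hD101 : ∀ ω, D1 ω = 0 ∨ D1 ω = 1)
    (hD001 : ∀ ω, D0 ω = 0 ∨ D0 ω = 1)
    (hZpos : 0 < μ {ω | Z ω = 1})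
    (hZlt : μ {ω | Z ω = 1} < 1)
    (hindep : IndepFun Z (fun ω => (Y1 ω, Y0 ω, D1 ω, D0 ω)) μ)
    (D Y : Ω → ℝ)
    (hDdef : D = fun ω => D1 ω * Z ω + D0 ω * (1 - Z ω))
    (hYdef : Y = fun ω => Y1 ω * D ω + Y0 ω * (1 - D ω))
    (hY1int : Integrable Y1 μ) (hY0int : Integrable Y0 μ)
    (a b c : ℝ)
    (ha : a = (μ {ω | D1 ω = 1 ∧ D0 ω = 1}).toReal)
    (hb : b = (μ {ω | D1 ω = 1 ∧ D0 ω = 0}).toReal)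
    (hc : c = (μ {ω | D1 ω = 0 ∧ D0 ω = 1}).toReal)
    (k1 k2 : ℝ)
    (hk1 : k1 = ∫ ω, D ω ∂(μ[|{ω | Z ω = 1}]))
    (hk2 : k2 = ∫ ω, D ω ∂(μ[|{ω | Z ω = 0}]))
    (mu1 mu2 : ℝ)
    (hmu1 : mu1 = ∫ ω, (Y1 ω - Y0 ω) ∂(μ[|{ω | D1 ω = 1 ∧ D0 ω = 0}]))
    (hmu2 : mu2 = ∫ ω, (Y1 ω - Y0 ω) ∂(μ[|{ω | D1 ω = 0 ∧ D0 ω = 1}]))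
    (beta : ℝ)
    (hbeta : beta = ((∫ ω, Y ω ∂(μ[|{ω | Z ω = 1}])) - ∫ ω, Y ω ∂(μ[|{ω | Z ω = 0}])) / (k1 - k2))
    (hbpos : 0 < b) (hcpos : 0 < c) (hbc : b ≠ c) :
    beta = (mu1 * b - mu2 * c) / (b - c) := by
  have hW : Measurable (fun ω => (Y1 ω, Y0 ω, D1 ω, D0 ω)) := by fun_prop
  have hZ1 : μ {ω | Z ω = 1} ≠ 0 := hZpos.ne'
  have hZ0 : μ {ω | Z ω = 0} ≠ 0 := by
    have hcompl : {ω | Z ω = 0} = {ω | Z ω = 1}ᶜ := by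
      ext ω
      rcases hZ01 ω with h | h <;> simp [h]
    have hs : MeasurableSet {ω | Z ω = 1} := hZm (measurableSet_singleton 1)
    rw [hcompl, Ne, prob_compl_eq_zero_iff hs]
    exact hZlt.ne
  have hDint {T : Ω → ℝ} (hTm : Measurable T) (hT : ∀ ω, T ω = 0 ∨ T ω = 1) :
      Integrable T μ := by
    simpa using integrable_mul_of_zero_or_one hTm hT (integrable_const (μ := μ) (1 : ℝ))
  -- The conditional means given `Z` are means of functions of the potential outcomes.
  have eD1 : k1 = ∫ ω, D1 ω ∂μ := hk1.trans <|
    integral_cond_fiber_eq μ hZm hW hindep hZ1 (g := fun w => w.2.2.1) (by fun_prop)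
      (fun ω h => by simp [hDdef, h])
  have eD0 : k2 = ∫ ω, D0 ω ∂μ := hk2.trans <|
    integral_cond_fiber_eq μ hZm hW hindep hZ0 (g := fun w => w.2.2.2) (by fun_prop)
      (fun ω h => by simp [hDdef, h])
  have eY1 : ∫ ω, Y ω ∂(μ[|{ω | Z ω = 1}]) = ∫ ω, ((Y1 ω - Y0 ω) * D1 ω + Y0 ω) ∂μ :=
    integral_cond_fiber_eq μ hZm hW hindep hZ1
      (g := fun w => (w.1 - w.2.1) * w.2.2.1 + w.2.1) (by fun_prop)
      (fun ω h => by simp only [hYdef, hDdef, h]; ring)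
  have eY0 : ∫ ω, Y ω ∂(μ[|{ω | Z ω = 0}]) = ∫ ω, ((Y1 ω - Y0 ω) * D0 ω + Y0 ω) ∂μ :=
    integral_cond_fiber_eq μ hZm hW hindep hZ0
      (g := fun w => (w.1 - w.2.1) * w.2.2.2 + w.2.1) (by fun_prop)
      (fun ω h => by simp only [hYdef, hDdef, h]; ring)
  have hdiff : Integrable (fun ω => Y1 ω - Y0 ω) μ := hY1int.sub hY0int
  have hb0 : μ {ω | D1 ω = 1 ∧ D0 ω = 0} ≠ 0 := fun h => by simp [hb, h] at hbpos
  have hc0 : μ {ω | D1 ω = 0 ∧ D0 ω = 1} ≠ 0 := fun h => by simp [hc, h] at hcpos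
  have hden : k1 - k2 = b - c := by
    rw [eD1, eD0, ← integral_sub (hDint hD1m hD101) (hDint hD0m hD001), hb, hc]
    simpa [Measure.real] using
      integral_mul_sub_eq μ hD1m hD0m hD101 hD001 (integrable_const (μ := μ) (1 : ℝ))
  have hnum : (∫ ω, Y ω ∂(μ[|{ω | Z ω = 1}])) - ∫ ω, Y ω ∂(μ[|{ω | Z ω = 0}])
      = mu1 * b - mu2 * c := by
    have hsplit := integral_mul_sub_eq μ hD1m hD0m hD101 hD001 hdiff
    rw [← measureReal_mul_integral_cond μ hb0, ← measureReal_mul_integral_cond μ hc0,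
      ← hmu1, ← hmu2, Measure.real, Measure.real, ← hb, ← hc] at hsplit
    rw [eY1, eY0, ← integral_sub
      ((integrable_mul_of_zero_or_one hD1m hD101 hdiff).fun_add hY0int)
      ((integrable_mul_of_zero_or_one hD0m hD001 hdiff).fun_add hY0int),
      mul_comm mu1, mul_comm mu2, ← hsplit]
    congr 1
    ext ω
    ring
  rw [hbeta, hnum, hden]
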